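/- Under Assumption 1, let i ∈ [m], let U, W ⊆ [m]∖{i}, and set V = U ∩ W. If I(X_{W∖V} → X_i ‖ X_U) = 0 and I(X_{U∖V} → X_i ‖ X_W) = 0, then I(X_{(U∪W)∖V} → X_i ‖ X_V) = 0. -/

import Mathlib

open Finset

/-- Probability of an event under the probability mass function `p` on a finite space. -/
noncomputable def pr {Ω : Type} [Fintype Ω] (p : Ω → ℝ) (E : Set Ω) : ℝ :=
  ∑ ω : Ω, E.indicator p ω

/-- Shannon conditional mutual information `I(A ; B | C)` of finite-valued random variables
on a finite probability space with pmf `p` (terms with vanishing probability contribute `0`,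
by the conventions `Real.log 0 = 0`, `x / 0 = 0`). -/
noncomputable def cmi {Ω α β γ : Type} [Fintype Ω] [Fintype α] [Fintype β] [Fintype γ]
    (p : Ω → ℝ) (A : Ω → α) (B : Ω → β) (C : Ω → γ) : ℝ :=
  ∑ a : α, ∑ b : β, ∑ c : γ,
    pr p {ω | A ω = a ∧ B ω = b ∧ C ω = c} *
      Real.log (pr p {ω | A ω = a ∧ B ω = b ∧ C ω = c} * pr p {ω | C ω = c} /
        (pr p {ω | A ω = a ∧ C ω = c} * pr p {ω | B ω = b ∧ C ω = c}))

/-- `A` and `B` are conditionally independent given `C` (under the pmf `p`). -/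
def CondIndep {Ω α β γ : Type} [Fintype Ω] (p : Ω → ℝ)
    (A : Ω → α) (B : Ω → β) (C : Ω → γ) : Prop :=
  ∀ (a : α) (b : β) (c : γ),
    pr p {ω | A ω = a ∧ B ω = b ∧ C ω = c} * pr p {ω | C ω = c}
      = pr p {ω | A ω = a ∧ C ω = c} * pr p {ω | B ω = b ∧ C ω = c}

/-- Trajectories of `m` processes over `n` time steps with alphabet `𝒳`:
`ω i j` is the value of process `i` at (0-indexed) time `j`. -/
abbrev Traj (m n : ℕ) (𝒳 : Type) := Fin m → Fin n → 𝒳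

/-- The past `X_S^{j-1}`: the values of the processes in `S` at times strictly before `j`;
all other entries are masked by `none`. -/
def past {m n : ℕ} {𝒳 : Type} (S : Finset (Fin m)) (j : Fin n) (ω : Traj m n 𝒳) :
    Fin m → Fin n → Option 𝒳 :=
  fun k t => if k ∈ S ∧ t < j then some (ω k t) else none

/-- Causally conditioned directed information
`I(X_S → X_i ‖ X_T) := Σ_{j=1}^{n} I(X_S^{j-1} ; X_{i,j} | X_i^{j-1}, X_T^{j-1})`. -/
noncomputable def di {m n : ℕ} {𝒳 : Type} [Fintype 𝒳] [DecidableEq 𝒳]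
    (p : Traj m n 𝒳 → ℝ) (S : Finset (Fin m)) (i : Fin m) (T : Finset (Fin m)) : ℝ :=
  ∑ j : Fin n,
    cmi p (past S j) (fun ω => ω i j) (fun ω => (past {i} j ω, past T j ω))

/-- Assumption 1: the joint distribution is strictly positive (and is a pmf), and at each
time `j` the variables `X_{1,j}, …, X_{m,j}` are mutually conditionally independent given
the full past `X_{[m]}^{j-1}` (stated in the division-free form
`P(joint ∧ past) · P(past)^{m-1} = Π_i P(X_{i,j} = x_i ∧ past)`). -/
def Assumption1 {m n : ℕ} {𝒳 : Type} [Fintype 𝒳] [DecidableEq 𝒳]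
    (p : Traj m n 𝒳 → ℝ) : Prop :=
  (∀ ω, 0 < p ω) ∧ (∑ ω : Traj m n 𝒳, p ω = 1) ∧
    ∀ (j : Fin n) (x : Fin m → 𝒳) (h : Fin m → Fin n → Option 𝒳),
      pr p {ω | (∀ i, ω i j = x i) ∧ past Finset.univ j ω = h} *
          pr p {ω | past Finset.univ j ω = h} ^ (m - 1)
        = ∏ i : Fin m, pr p {ω | ω i j = x i ∧ past Finset.univ j ω = h}

/-- `S ⊆ [m]∖{i}` is a causal Markov blanket of `X_i` if
`I(X_{[m]∖({i}∪S)} → X_i ‖ X_S) = 0`. -/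
def IsCausalBlanket {m n : ℕ} {𝒳 : Type} [Fintype 𝒳] [DecidableEq 𝒳]
    (p : Traj m n 𝒳 → ℝ) (i : Fin m) (S : Finset (Fin m)) : Prop :=
  S ⊆ Finset.univ.erase i ∧ di p (Finset.univ.erase i \ S) i S = 0

/-- A causal Markov boundary `A(i)` of `X_i` is a causal Markov blanket of minimum
cardinality. -/
def IsCausalBoundary {m n : ℕ} {𝒳 : Type} [Fintype 𝒳] [DecidableEq 𝒳]
    (p : Traj m n 𝒳 → ℝ) (i : Fin m) (A : Finset (Fin m)) : Prop :=
  IsCausalBlanket p i A ∧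
    ∀ B : Finset (Fin m), IsCausalBlanket p i B → A.card ≤ B.card

/-!
`I(A; B | C)` is the relative entropy of the joint law with respect to the law that makes `A` and
`B` conditionally independent given `C`, so it vanishes exactly under conditional independence.
This reduces the theorem, time by time, to the intersection property: `A₁ ⟂ B | (A₂, C)` and
`A₂ ⟂ B | (A₁, C)` imply `(A₁, A₂) ⟂ B | C`, with `A₁`, `A₂` the pasts of `U \ W` and `W \ U`. The
hypotheses say that `P(b | a₁, a₂, c)` depends only on `(a₂, c)`, and only on `(a₁, c)`. If all
pairs of values `a₁`, `a₂` that are possible given `c` occur together, it depends only on `c`. For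
pasts, two trajectories are pasted together to realise such a pair.
-/

section Probability

variable {Ω α : Type} [Fintype Ω] {p : Ω → ℝ} {E F : Set Ω}

lemma pr_nonneg (hp : 0 ≤ p) (E : Set Ω) : 0 ≤ pr p E :=
  Finset.sum_nonneg fun _ _ => Set.indicator_nonneg (fun ω _ => hp ω) _

lemma pr_mono (hp : 0 ≤ p) (h : E ⊆ F) : pr p E ≤ pr p F :=
  Finset.sum_le_sum fun ω _ => Set.indicator_le_indicator_of_subset h hp ω

lemma pr_eq_zero_of_subset (hp : 0 ≤ p) (h : E ⊆ F) (hF : pr p F = 0) : pr p E = 0 :=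
  le_antisymm (hF ▸ pr_mono hp h) (pr_nonneg hp E)

lemma nonempty_of_pr_ne_zero (h : pr p E ≠ 0) : E.Nonempty := by
  contrapose! h
  simp [pr, h]

lemma pr_pos (hp : ∀ ω, 0 < p ω) (hE : E.Nonempty) : 0 < pr p E := by
  obtain ⟨ω, hω⟩ := hE
  refine Finset.sum_pos' (fun _ _ => Set.indicator_nonneg (fun ω _ => (hp ω).le) _)
    ⟨ω, Finset.mem_univ ω, ?_⟩
  rw [Set.indicator_of_mem hω]
  exact hp ω

lemma sum_pr_eq_and [Fintype α] (A : Ω → α) (Q : Ω → Prop) :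
    ∑ a, pr p {ω | A ω = a ∧ Q ω} = pr p {ω | Q ω} := by
  classical
  unfold pr
  rw [Finset.sum_comm]
  refine Finset.sum_congr rfl fun ω _ => ?_
  by_cases hQ : Q ω <;> simp [Set.indicator_apply, hQ]

end Probability

section ConditionalMutualInformation

open InformationTheory

variable {Ω α β γ : Type} [Fintype Ω] {p : Ω → ℝ}

/-- The weight `P(a, c) P(b, c) / P(c)` that the value `(a, b, c)` of `(A, B, C)` would have if `A`
and `B` were made conditionally independent given `C` without changing the laws of `(A, C)` and
`(B, C)`. It is `0` when `P(c) = 0`. -/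
noncomputable def condIndepMass (p : Ω → ℝ) (A : Ω → α) (B : Ω → β) (C : Ω → γ)
    (a : α) (b : β) (c : γ) : ℝ :=
  pr p {ω | A ω = a ∧ C ω = c} * pr p {ω | B ω = b ∧ C ω = c} / pr p {ω | C ω = c}

variable {A : Ω → α} {B : Ω → β} {C : Ω → γ}

lemma condIndepMass_nonneg (hp : 0 ≤ p) (a : α) (b : β) (c : γ) :
    0 ≤ condIndepMass p A B C a b c :=
  div_nonneg (mul_nonneg (pr_nonneg hp _) (pr_nonneg hp _)) (pr_nonneg hp _)

lemma pr_eq_zero_of_condIndepMass_eq_zero (hp : 0 ≤ p) {a : α} {b : β} {c : γ}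
    (h : condIndepMass p A B C a b c = 0) : pr p {ω | A ω = a ∧ B ω = b ∧ C ω = c} = 0 := by
  rcases div_eq_zero_iff.mp h with h | hc
  · rcases mul_eq_zero.mp h with hac | hbc
    · exact pr_eq_zero_of_subset hp (fun _ hω => And.intro hω.1 hω.2.2) hac
    · exact pr_eq_zero_of_subset hp (fun _ hω => hω.2) hbc
  · exact pr_eq_zero_of_subset hp (fun _ hω => hω.2.2) hc

lemma condIndep_iff_pr_eq_condIndepMass (hp : 0 ≤ p) :
    CondIndep p A B C ↔ ∀ a b c,
      pr p {ω | A ω = a ∧ B ω = b ∧ C ω = c} = condIndepMass p A B C a b c := by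
  refine forall₃_congr fun a b c => ?_
  by_cases hc : pr p {ω | C ω = c} = 0
  · have habc : pr p {ω | A ω = a ∧ B ω = b ∧ C ω = c} = 0 :=
      pr_eq_zero_of_subset hp (fun _ hω => hω.2.2) hc
    have hac : pr p {ω | A ω = a ∧ C ω = c} = 0 :=
      pr_eq_zero_of_subset hp (fun _ hω => hω.2) hc
    rw [habc, hac, condIndepMass, hc, mul_zero, zero_mul, div_zero]
  · rw [condIndepMass, eq_div_iff hc]

lemma sum_pr_eq_sum_condIndepMass [Fintype α] [Fintype β] (c : γ) :
    ∑ a, ∑ b, pr p {ω | A ω = a ∧ B ω = b ∧ C ω = c} =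
      ∑ a, ∑ b, condIndepMass p A B C a b c := by
  calc
    _ = pr p {ω | C ω = c} := by
      rw [Finset.sum_comm]
      simp only [sum_pr_eq_and]
    _ = pr p {ω | C ω = c} * pr p {ω | C ω = c} / pr p {ω | C ω = c} :=
      (mul_self_div_self _).symm
    _ = _ := by
      simp only [condIndepMass, ← Finset.sum_div, ← Finset.mul_sum, ← Finset.sum_mul, sum_pr_eq_and]

lemma mul_log_div_eq_mul_klFun {x y : ℝ} (h : y = 0 → x = 0) :
    x * Real.log (x / y) = y * klFun (x / y) + (x - y) := by
  by_cases hy : y = 0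
  · simp [hy, h hy]
  · rw [klFun_apply]
    field_simp
    ring

-- The corrections `x - y` from `mul_log_div_eq_mul_klFun` cancel, as both laws have equal mass.
lemma cmi_eq_sum_mul_klFun [Fintype α] [Fintype β] [Fintype γ] (hp : 0 ≤ p) :
    cmi p A B C = ∑ a, ∑ b, ∑ c, condIndepMass p A B C a b c *
      klFun (pr p {ω | A ω = a ∧ B ω = b ∧ C ω = c} / condIndepMass p A B C a b c) := by
  have hmass : ∑ a, ∑ b, ∑ c, pr p {ω | A ω = a ∧ B ω = b ∧ C ω = c} =
      ∑ a, ∑ b, ∑ c, condIndepMass p A B C a b c := by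
    rw [Finset.sum_comm_cycle, Finset.sum_comm_cycle (γ := α)]
    exact Finset.sum_congr rfl fun c _ => sum_pr_eq_sum_condIndepMass c
  have hterm (a : α) (b : β) (c : γ) :=
    mul_log_div_eq_mul_klFun (pr_eq_zero_of_condIndepMass_eq_zero (A := A) (B := B) (C := C)
      (a := a) (b := b) (c := c) hp)
  calc
    cmi p A B C = ∑ a, ∑ b, ∑ c, pr p {ω | A ω = a ∧ B ω = b ∧ C ω = c} * Real.log
        (pr p {ω | A ω = a ∧ B ω = b ∧ C ω = c} / condIndepMass p A B C a b c) := by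
      simp only [cmi, condIndepMass, div_div_eq_mul_div]
    _ = _ := by
      simp only [hterm, Finset.sum_add_distrib, Finset.sum_sub_distrib, hmass, sub_self, add_zero]

lemma condIndepMass_mul_klFun_nonneg (hp : 0 ≤ p) (a : α) (b : β) (c : γ) :
    0 ≤ condIndepMass p A B C a b c *
      klFun (pr p {ω | A ω = a ∧ B ω = b ∧ C ω = c} / condIndepMass p A B C a b c) :=
  have hq := condIndepMass_nonneg hp a b c
  mul_nonneg hq (klFun_nonneg (div_nonneg (pr_nonneg hp _) hq))

lemma condIndepMass_mul_klFun_eq_zero_iff (hp : 0 ≤ p) (a : α) (b : β) (c : γ) :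
    condIndepMass p A B C a b c *
        klFun (pr p {ω | A ω = a ∧ B ω = b ∧ C ω = c} / condIndepMass p A B C a b c) = 0 ↔
      pr p {ω | A ω = a ∧ B ω = b ∧ C ω = c} = condIndepMass p A B C a b c := by
  by_cases hq : condIndepMass p A B C a b c = 0
  · simp [hq, pr_eq_zero_of_condIndepMass_eq_zero hp hq]
  · rw [mul_eq_zero_iff_left hq,
      klFun_eq_zero_iff (div_nonneg (pr_nonneg hp _) (condIndepMass_nonneg hp a b c)),
      div_eq_one_iff_eq hq]

lemma sum_sum_sum_eq_zero_iff_of_nonneg {ι κ ν M : Type*} [Fintype ι] [Fintype κ] [Fintype ν]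
    [AddCommMonoid M] [PartialOrder M] [IsOrderedAddMonoid M] {f : ι → κ → ν → M}
    (hf : ∀ a b c, 0 ≤ f a b c) : ∑ a, ∑ b, ∑ c, f a b c = 0 ↔ ∀ a b c, f a b c = 0 := by
  have hc (a : ι) (b : κ) : 0 ≤ ∑ c, f a b c := Finset.sum_nonneg fun c _ => hf a b c
  have hb (a : ι) : 0 ≤ ∑ b, ∑ c, f a b c := Finset.sum_nonneg fun b _ => hc a b
  simp only [Finset.sum_eq_zero_iff_of_nonneg, hf, hc, hb, Finset.mem_univ, true_imp_iff,
    implies_true]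

theorem cmi_nonneg [Fintype α] [Fintype β] [Fintype γ] (hp : 0 ≤ p) : 0 ≤ cmi p A B C := by
  rw [cmi_eq_sum_mul_klFun hp]
  exact Finset.sum_nonneg fun a _ => Finset.sum_nonneg fun b _ => Finset.sum_nonneg fun c _ =>
    condIndepMass_mul_klFun_nonneg hp a b c

theorem cmi_eq_zero_iff [Fintype α] [Fintype β] [Fintype γ] (hp : 0 ≤ p) :
    cmi p A B C = 0 ↔ CondIndep p A B C := by
  rw [cmi_eq_sum_mul_klFun hp, condIndep_iff_pr_eq_condIndepMass hp,
    sum_sum_sum_eq_zero_iff_of_nonneg (condIndepMass_mul_klFun_nonneg hp)]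
  simp only [condIndepMass_mul_klFun_eq_zero_iff hp]

end ConditionalMutualInformation

section ConditionalIndependence

variable {Ω α α' α₁ α₂ β γ γ' : Type} [Fintype Ω] {p : Ω → ℝ}
  {A : Ω → α} {A' : Ω → α'} {A₁ : Ω → α₁} {A₂ : Ω → α₂} {B : Ω → β} {C : Ω → γ} {C' : Ω → γ'}

lemma condIndep_iff_forall_apply :
    CondIndep p A B C ↔ ∀ ω₀ b,
      pr p {ω | A ω = A ω₀ ∧ B ω = b ∧ C ω = C ω₀} * pr p {ω | C ω = C ω₀} =
        pr p {ω | A ω = A ω₀ ∧ C ω = C ω₀} * pr p {ω | B ω = b ∧ C ω = C ω₀} := by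
  refine ⟨fun h ω₀ b => h _ b _, fun h a b c => ?_⟩
  by_cases hac : ∃ ω₀, A ω₀ = a ∧ C ω₀ = c
  · obtain ⟨ω₀, rfl, rfl⟩ := hac
    exact h ω₀ b
  · have hac_zero : pr p {ω | A ω = a ∧ C ω = c} = 0 :=
      not_not.mp fun h => hac (nonempty_of_pr_ne_zero h)
    have habc_zero : pr p {ω | A ω = a ∧ B ω = b ∧ C ω = c} = 0 :=
      not_not.mp fun h => hac ((nonempty_of_pr_ne_zero h).imp fun _ hω => ⟨hω.1, hω.2.2⟩)
    rw [hac_zero, habc_zero, zero_mul, zero_mul]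

lemma condIndep_congr (hC : ∀ ω ω', C ω = C ω' ↔ C' ω = C' ω')
    (hA : ∀ ω ω', C ω = C ω' → (A ω = A ω' ↔ A' ω = A' ω')) :
    CondIndep p A B C ↔ CondIndep p A' B C' := by
  have hAC (ω ω' : Ω) : A ω = A ω' ∧ C ω = C ω' ↔ A' ω = A' ω' ∧ C' ω = C' ω' := by
    rw [← hC, and_congr_left (hA ω ω')]
  have hABC (ω ω' : Ω) (b : β) :
      A ω = A ω' ∧ B ω = b ∧ C ω = C ω' ↔ A' ω = A' ω' ∧ B ω = b ∧ C' ω = C' ω' := by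
    rw [and_left_comm, hAC, and_left_comm]
  simp only [condIndep_iff_forall_apply, hABC, hAC]
  simp only [hC]

-- The factor `q` plays the role of `P(B = b | C = c)`, whatever its value where `P(C = c) = 0`.
lemma condIndep_iff_exists_pr_eq_mul [Finite α] (hp : 0 ≤ p) :
    CondIndep p A B C ↔ ∀ b c, ∃ q, ∀ a,
      pr p {ω | A ω = a ∧ B ω = b ∧ C ω = c} = q * pr p {ω | A ω = a ∧ C ω = c} := by
  have := Fintype.ofFinite α
  refine ⟨fun h b c => ?_, fun h a b c => ?_⟩
  · refine ⟨pr p {ω | B ω = b ∧ C ω = c} / pr p {ω | C ω = c}, fun a => ?_⟩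
    rw [(condIndep_iff_pr_eq_condIndepMass hp).mp h a b c, condIndepMass]
    ring
  · obtain ⟨q, hq⟩ := h b c
    have hbc : pr p {ω | B ω = b ∧ C ω = c} = q * pr p {ω | C ω = c} := by
      rw [← sum_pr_eq_and A, ← sum_pr_eq_and A, Finset.mul_sum]
      exact Finset.sum_congr rfl fun a _ => hq a
    rw [hq, hbc]
    ring

theorem CondIndep.inter [Finite α₁] [Finite α₂] (hp : 0 ≤ p)
    (hpos : ∀ a₁ a₂ c, pr p {ω | A₁ ω = a₁ ∧ C ω = c} ≠ 0 → pr p {ω | A₂ ω = a₂ ∧ C ω = c} ≠ 0 →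
      pr p {ω | A₁ ω = a₁ ∧ A₂ ω = a₂ ∧ C ω = c} ≠ 0)
    (h₁ : CondIndep p A₁ B (fun ω => (A₂ ω, C ω)))
    (h₂ : CondIndep p A₂ B (fun ω => (A₁ ω, C ω))) :
    CondIndep p (fun ω => (A₁ ω, A₂ ω)) B C := by
  rw [condIndep_iff_exists_pr_eq_mul hp] at h₁ h₂ ⊢
  intro b c
  choose q₁ hq₁ using fun a₂ => h₁ b (a₂, c)
  choose q₂ hq₂ using fun a₁ => h₂ b (a₁, c)
  simp only [Prod.mk.injEq] at hq₁ hq₂ ⊢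
  by_cases hc : pr p {ω | C ω = c} = 0
  · refine ⟨0, fun a => ?_⟩
    rw [zero_mul]
    exact pr_eq_zero_of_subset hp (fun _ hω => hω.2.2) hc
  have := Fintype.ofFinite α₁
  obtain ⟨a₁', -, ha₁'⟩ := Finset.exists_ne_zero_of_sum_ne_zero (sum_pr_eq_and A₁ _ ▸ hc)
  have hq₂' (a₂ : α₂) : pr p {ω | A₁ ω = a₁' ∧ B ω = b ∧ A₂ ω = a₂ ∧ C ω = c} =
      q₂ a₁' * pr p {ω | A₁ ω = a₁' ∧ A₂ ω = a₂ ∧ C ω = c} := by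
    simpa only [and_left_comm] using hq₂ a₁' a₂
  have hq (a₂ : α₂) (ha₂ : pr p {ω | A₂ ω = a₂ ∧ C ω = c} ≠ 0) : q₁ a₂ = q₂ a₁' :=
    mul_right_cancel₀ (hpos a₁' a₂ c ha₁' ha₂) ((hq₁ a₂ a₁').symm.trans (hq₂' a₂))
  refine ⟨q₂ a₁', fun ⟨a₁, a₂⟩ => ?_⟩
  simp only [Prod.mk.injEq, and_assoc]
  by_cases ha₂ : pr p {ω | A₂ ω = a₂ ∧ C ω = c} = 0
  · rw [pr_eq_zero_of_subset hp (fun _ hω => And.intro hω.2.1 hω.2.2.2) ha₂,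
      pr_eq_zero_of_subset hp (fun _ hω => hω.2) ha₂, mul_zero]
  · rw [← hq a₂ ha₂, ← hq₁]
    simp only [and_left_comm]

end ConditionalIndependence

section DirectedInformation

variable {m n : ℕ} {𝒳 : Type} {p : Traj m n 𝒳 → ℝ} {S T : Finset (Fin m)} {i : Fin m} {j : Fin n}
  {ω ω' : Traj m n 𝒳}

lemma di_eq_zero_iff [Fintype 𝒳] [DecidableEq 𝒳] (hp : 0 ≤ p) :
    di p S i T = 0 ↔
      ∀ j, CondIndep p (past S j) (fun ω => ω i j) (fun ω => (past {i} j ω, past T j ω)) := by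
  rw [di, Finset.sum_eq_zero_iff_of_nonneg fun j _ => cmi_nonneg hp]
  simp only [Finset.mem_univ, true_imp_iff, cmi_eq_zero_iff hp]

lemma past_eq_past_iff : past S j ω = past S j ω' ↔ ∀ k ∈ S, ∀ t < j, ω k t = ω' k t := by
  simp only [funext_iff, past]
  grind

lemma past_union_eq_iff :
    past (S ∪ T) j ω = past (S ∪ T) j ω' ↔ past S j ω = past S j ω' ∧ past T j ω = past T j ω' := by
  simp only [past_eq_past_iff, Finset.forall_mem_union]

lemma past_eq_of_subset (hST : S ⊆ T)
    (h : past T j ω = past T j ω') : past S j ω = past S j ω' :=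
  past_eq_past_iff.mpr fun k hk => past_eq_past_iff.mp h k (hST hk)

lemma exists_past_eq_past_eq (h : past (S ∩ T) j ω = past (S ∩ T) j ω') :
    ∃ ω'', past S j ω'' = past S j ω ∧ past T j ω'' = past T j ω' := by
  simp only [past_eq_past_iff, Finset.mem_inter] at h ⊢
  exact ⟨fun k => if k ∈ S then ω k else ω' k, by grind, by grind⟩

theorem CondIndep.past_inter [Fintype 𝒳] {β : Type} {B : Traj m n 𝒳 → β} (hp : ∀ ω, 0 < p ω)
    {R U W : Finset (Fin m)}
    (hU : CondIndep p (past (W \ U) j) B (fun ω => (past R j ω, past U j ω)))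
    (hW : CondIndep p (past (U \ W) j) B (fun ω => (past R j ω, past W j ω))) :
    CondIndep p (past (U \ W ∪ W \ U) j) B (fun ω => (past R j ω, past (U ∩ W) j ω)) := by
  have hUC (ω ω' : Traj m n 𝒳) : past U j ω = past U j ω' ↔
      past (U \ W) j ω = past (U \ W) j ω' ∧ past (U ∩ W) j ω = past (U ∩ W) j ω' := by
    rw [← past_union_eq_iff, Finset.sdiff_union_inter]
  have hWC (ω ω' : Traj m n 𝒳) : past W j ω = past W j ω' ↔
      past (W \ U) j ω = past (W \ U) j ω' ∧ past (U ∩ W) j ω = past (U ∩ W) j ω' := by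
    rw [← past_union_eq_iff, Finset.inter_comm U W, Finset.sdiff_union_inter]
  have hW' : CondIndep p (past (U \ W) j) B
      (fun ω => (past (W \ U) j ω, past R j ω, past (U ∩ W) j ω)) := by
    refine (condIndep_congr (fun ω ω' => ?_) fun _ _ _ => Iff.rfl).mp hW
    simp only [Prod.mk.injEq, hWC]
    tauto
  have hU' : CondIndep p (past (W \ U) j) B
      (fun ω => (past (U \ W) j ω, past R j ω, past (U ∩ W) j ω)) := by
    refine (condIndep_congr (fun ω ω' => ?_) fun _ _ _ => Iff.rfl).mp hU
    simp only [Prod.mk.injEq, hUC]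
    tauto
  refine (condIndep_congr (fun _ _ => Iff.rfl) fun ω ω' _ => ?_).mpr
    (CondIndep.inter (fun ω => (hp ω).le) (fun a₁ a₂ c h₁ h₂ => ?_) hW' hU')
  · rw [past_union_eq_iff, Prod.mk.injEq]
  · obtain ⟨ω₁, rfl, hω₁⟩ := nonempty_of_pr_ne_zero h₁
    obtain ⟨ω₂, rfl, rfl⟩ := nonempty_of_pr_ne_zero h₂
    have hR : past R j ω₁ = past R j ω₂ := congrArg Prod.fst hω₁
    have hoverlap : U \ W ∩ (R ∪ W) ⊆ R := by grind
    obtain ⟨ω, hωUW, hωRW⟩ := exists_past_eq_past_eq (past_eq_of_subset hoverlap hR)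
    obtain ⟨hωR, hωW⟩ := past_union_eq_iff.mp hωRW
    obtain ⟨hωWU, hωV⟩ := (hWC ω ω₂).mp hωW
    exact (pr_pos hp ⟨ω, And.intro hωUW (And.intro hωWU (Prod.ext hωR hωV))⟩).ne'

end DirectedInformation

theorem stmt_3_general {m n : ℕ} {𝒳 : Type} [Fintype 𝒳] [DecidableEq 𝒳]
    (p : Traj m n 𝒳 → ℝ) (hp : ∀ ω, 0 < p ω) (i : Fin m) (U W : Finset (Fin m))
    (h1 : di p (W \ (U ∩ W)) i U = 0) (h2 : di p (U \ (U ∩ W)) i W = 0) :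
    di p ((U ∪ W) \ (U ∩ W)) i (U ∩ W) = 0 := by
  have hUW : (U ∪ W) \ (U ∩ W) = U \ W ∪ W \ U := by grind
  rw [Finset.sdiff_inter_self_right, di_eq_zero_iff fun ω => (hp ω).le] at h1
  rw [Finset.sdiff_inter_self_left, di_eq_zero_iff fun ω => (hp ω).le] at h2
  rw [hUW, di_eq_zero_iff fun ω => (hp ω).le]
  exact fun j => (h1 j).past_inter hp (h2 j)

/-- intersection property. Under Assumption 1, for `i ∈ [m]`,
`U, W ⊆ [m]∖{i}` and `V = U ∩ W`: if `I(X_{W∖V} → X_i ‖ X_U) = 0` and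
`I(X_{U∖V} → X_i ‖ X_W) = 0`, then `I(X_{(U∪W)∖V} → X_i ‖ X_V) = 0`. -/
theorem stmt_3 {m n : ℕ} (hm : 2 ≤ m) (hn : 1 ≤ n)
    {𝒳 : Type} [Fintype 𝒳] [DecidableEq 𝒳] [Nonempty 𝒳]
    (p : Traj m n 𝒳 → ℝ) (hp : Assumption1 p)
    (i : Fin m) (U W : Finset (Fin m))
    (hU : U ⊆ Finset.univ.erase i) (hW : W ⊆ Finset.univ.erase i)
    (h1 : di p (W \ (U ∩ W)) i U = 0)
    (h2 : di p (U \ (U ∩ W)) i W = 0) :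
    di p ((U ∪ W) \ (U ∩ W)) i (U ∩ W) = 0 :=
  stmt_3_general p hp.1 i U W h1 h2
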